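/- Let V : ℝ² → ℝ² be the map V(p) = (1/2)(1 − 1/‖p‖²) • p, and define λ : ℝ² → (ℝ² → ℝ) by λ(p)(w) = (V(p))₁·w₂ − (V(p))₂·w₁. Then for every p ≠ 0, λ is differentiable at p and for all u, v ∈ ℝ²: Dλ(p)(u)(v) − Dλ(p)(v)(u) = u₁v₂ − u₂v₁, where Dλ(p) denotes the Fréchet derivative of λ at p (viewed as a map into continuous linear functionals). -/

import Mathlib

/-!
Write `lam q = g q • ω(q, ·)` with `g q = (1 - 1/‖q‖²)/2`. The product rule gives
`D lam(p)(u)(v) = g p * ω(u, v) + (⟪p, u⟫ / ‖p‖⁴) * ω(p, v)`. Antisymmetrizing, the first term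
contributes `(1 - 1/‖p‖²) ω(u, v)`, and the second contributes `ω(u, v) / ‖p‖²` by the planar
identity `⟪p, u⟫ ω(p, v) - ⟪p, v⟫ ω(p, u) = ‖p‖² ω(u, v)`; the sum is `ω(u, v)`.
-/

/-- The Liouville vector field `v₀ = (1/2)(r - 1/r)∂_r` on the annulus, in Cartesian
coordinates: `V(p) = (1/2)(1 - 1/‖p‖²) • p`. -/
noncomputable def V (p : EuclideanSpace ℝ (Fin 2)) : EuclideanSpace ℝ (Fin 2) :=
  ((1 : ℝ) / 2 * (1 - 1 / ‖p‖ ^ 2)) • p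

/-- The standard area form `ω(u, v) = u₁v₂ - u₂v₁`, as a continuous linear map `u ↦ ω(u, ·)`. -/
noncomputable def areaCLM :
    EuclideanSpace ℝ (Fin 2) →L[ℝ] (EuclideanSpace ℝ (Fin 2) →L[ℝ] ℝ) :=
  (EuclideanSpace.proj 0 : EuclideanSpace ℝ (Fin 2) →L[ℝ] ℝ).smulRight
      (EuclideanSpace.proj 1 : EuclideanSpace ℝ (Fin 2) →L[ℝ] ℝ) -
    (EuclideanSpace.proj 1 : EuclideanSpace ℝ (Fin 2) →L[ℝ] ℝ).smulRight
      (EuclideanSpace.proj 0 : EuclideanSpace ℝ (Fin 2) →L[ℝ] ℝ)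

lemma areaCLM_apply (u v : EuclideanSpace ℝ (Fin 2)) :
    areaCLM u v = u 0 * v 1 - u 1 * v 0 := by
  simp [areaCLM]

lemma hasFDerivAt_radialFactor (p : EuclideanSpace ℝ (Fin 2)) (hp : p ≠ 0) :
    HasFDerivAt (fun q : EuclideanSpace ℝ (Fin 2) => (1 : ℝ) / 2 * (1 - 1 / ‖q‖ ^ 2))
      ((1 / (‖p‖ ^ 2) ^ 2) • innerSL ℝ p) p := by
  have hn : ‖p‖ ^ 2 ≠ 0 := by simpa using hp
  have h1 : HasFDerivAt (fun q : EuclideanSpace ℝ (Fin 2) => ‖q‖ ^ 2) (2 • innerSL ℝ p) p :=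
    (hasStrictFDerivAt_norm_sq p).hasFDerivAt
  have h2 : HasDerivAt (fun t : ℝ => (1 : ℝ) / 2 * (1 - 1 / t))
      (1 / 2 * (1 / (‖p‖ ^ 2) ^ 2)) (‖p‖ ^ 2) := by
    have h := ((hasDerivAt_inv hn).const_sub 1).const_mul ((1 : ℝ) / 2)
    simpa [one_div] using h
  have h3 := h2.comp_hasFDerivAt p h1
  refine h3.congr_fderiv ?_
  ext u
  simp
  ring

/-- If `lam` is the 1-form `i_{v₀}ω`, i.e. `lam p w = (V p)₁ w₂ - (V p)₂ w₁` (viewed as a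
map into continuous linear functionals), then for every `p ≠ 0` it is differentiable at
`p` and `d lam = ω`, i.e. `D lam(p)(u)(v) - D lam(p)(v)(u) = u₁v₂ - u₂v₁`. -/
theorem exterior_deriv_interior_product_eq_area_form
    (lam : EuclideanSpace ℝ (Fin 2) → (EuclideanSpace ℝ (Fin 2) →L[ℝ] ℝ))
    (hlam : ∀ p w, lam p w = V p 0 * w 1 - V p 1 * w 0)
    (p : EuclideanSpace ℝ (Fin 2)) (hp : p ≠ 0) :
    DifferentiableAt ℝ lam p ∧
      ∀ u v : EuclideanSpace ℝ (Fin 2),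
        fderiv ℝ lam p u v - fderiv ℝ lam p v u = u 0 * v 1 - u 1 * v 0 := by
  have hn : ‖p‖ ^ 2 ≠ 0 := by simpa using hp
  have hfun : lam = fun q => ((1 : ℝ) / 2 * (1 - 1 / ‖q‖ ^ 2)) • areaCLM q := by
    funext q
    refine ContinuousLinearMap.ext fun w => ?_
    rw [hlam, smul_apply, areaCLM_apply]
    simp only [V, PiLp.smul_apply, smul_eq_mul]
    ring
  have hD := (hasFDerivAt_radialFactor p hp).smul (areaCLM.hasFDerivAt (x := p))
  have hD' := hD.congr_of_eventuallyEq (Filter.EventuallyEq.of_eq hfun)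
  refine ⟨hD'.differentiableAt, fun u v => ?_⟩
  have hsq : ‖p‖ ^ 2 = p 0 ^ 2 + p 1 ^ 2 := by
    simp [EuclideanSpace.norm_sq_eq, Fin.sum_univ_two]
  rw [hD'.fderiv]
  simp only [add_apply, smul_apply,
    ContinuousLinearMap.smulRight_apply, areaCLM_apply, innerSL_apply_apply, smul_eq_mul,
    PiLp.inner_apply, Fin.sum_univ_two, RCLike.inner_apply, conj_trivial]
  rw [hsq] at hn ⊢
  field_simp
  ring
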